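/- arXiv:1711.09253 — 10 statements merged into one kernel-verified Lean document; each statement's English description precedes it below -/
import Mathlib

section
/- Let m, n, p, a, b ∈ ℂ and let z₁, z₂, z₃ be the roots with multiplicity of X³ + mX² + nX + p over ℂ. Then ∏ᵢ₌₁³ (Y + zᵢ² + b·zᵢ + a) = Y³ + (3a − mb + m² − 2n)·Y² + (nb² + (3p − mn)b + n² − 2mp − 2mab + (2m² − 4n)a + 3a²)·Y + (−pb³ + mpb² − npb + p² + nab² + (3p − mn)ab + (n² − 2mp)a + (m² − 2n)a² − ma²b + a³). -/
open Polynomial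

/-- The Tschirnhaus transform of the cubic `X³ + mX² + nX + p` by the quadratic
subsidiary `z² + bz + a + y = 0`: with roots `z₁, z₂, z₃` (with multiplicity),
`∏ᵢ (Y + zᵢ² + b·zᵢ + a)` is the explicit cubic computed by Bring in §VI. -/
theorem bring_cubic_tschirnhaus_transform (m n p a b z₁ z₂ z₃ : ℂ)
    (hroots : (X ^ 3 + C m * X ^ 2 + C n * X + C p).roots = {z₁, z₂, z₃}) :
    (X + C (z₁ ^ 2 + b * z₁ + a)) * (X + C (z₂ ^ 2 + b * z₂ + a)) *
        (X + C (z₃ ^ 2 + b * z₃ + a)) =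
      X ^ 3 + C (3 * a - m * b + m ^ 2 - 2 * n) * X ^ 2 +
        C (n * b ^ 2 + (3 * p - m * n) * b + n ^ 2 - 2 * m * p - 2 * m * a * b +
            (2 * m ^ 2 - 4 * n) * a + 3 * a ^ 2) * X +
        C (-p * b ^ 3 + m * p * b ^ 2 - n * p * b + p ^ 2 + n * a * b ^ 2 +
            (3 * p - m * n) * a * b + (n ^ 2 - 2 * m * p) * a +
            (m ^ 2 - 2 * n) * a ^ 2 - m * a ^ 2 * b + a ^ 3) := by
  have hm : (X ^ 3 + C m * X ^ 2 + C n * X + C p : ℂ[X]).Monic := by monicity!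
  have hf := (IsAlgClosed.splits (X ^ 3 + C m * X ^ 2 + C n * X + C p : ℂ[X])).eq_prod_roots
  rw [hroots, hm.leadingCoeff] at hf
  have h0 := congrArg (eval 0) hf
  have h1 := congrArg (eval 1) hf
  have h2 := congrArg (eval (-1)) hf
  simp at h0 h1 h2
  have hp : p = -(z₁ * z₂ * z₃) := by linear_combination h0
  have hmm : m = -(z₁ + z₂ + z₃) := by linear_combination (h1 + h2) / 2 - h0
  have hn : n = z₁ * z₂ + z₁ * z₃ + z₂ * z₃ := by linear_combination (h1 - h2) / 2
  subst hp hmm hn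
  simp only [map_add, map_sub, map_mul, map_pow, map_neg, map_ofNat]
  ring
end

section
/- Let m, n, p ∈ ℂ with m² ≠ 3n. Let b ∈ ℂ be any root of (3n − m²)·b² + (2m³ − 7mn + 9p)·b + (4m²n − m⁴ − n² − 6mp) = 0, and set a = (mb − m² + 2n)/3. Let z₁, z₂, z₃ be the roots with multiplicity of X³ + mX² + nX + p over ℂ. Then the polynomial T(Y) = ∏ᵢ₌₁³ (Y + zᵢ² + b·zᵢ + a) has zero coefficient of Y² and zero coefficient of Y¹; that is, T(Y) = Y³ + c for some c ∈ ℂ. In particular, both intermediate terms of a general cubic can be removed by a quadratic Tschirnhaus transformation whose parameters are found by solving only a quadratic equation. -/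
open Polynomial

/-- Bring §VI: if `m² ≠ 3n`, `b` is a root of the quadratic
`(3n - m²)b² + (2m³ - 7mn + 9p)b + (4m²n - m⁴ - n² - 6mp) = 0` and
`a = (mb - m² + 2n)/3`, then the quadratic Tschirnhaus transform
`T(Y) = ∏ᵢ (Y + zᵢ² + b·zᵢ + a)` of the cubic `X³ + mX² + nX + p`
loses both intermediate terms: `T(Y) = Y³ + c`. -/
theorem bring_cubic_remove_both_terms (m n p b : ℂ) (hm : m ^ 2 ≠ 3 * n)
    (hb : (3 * n - m ^ 2) * b ^ 2 + (2 * m ^ 3 - 7 * m * n + 9 * p) * b +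
      (4 * m ^ 2 * n - m ^ 4 - n ^ 2 - 6 * m * p) = 0)
    (a : ℂ) (ha : a = (m * b - m ^ 2 + 2 * n) / 3)
    (z₁ z₂ z₃ : ℂ)
    (hroots : (X ^ 3 + C m * X ^ 2 + C n * X + C p).roots = {z₁, z₂, z₃}) :
    ((X + C (z₁ ^ 2 + b * z₁ + a)) * (X + C (z₂ ^ 2 + b * z₂ + a)) *
        (X + C (z₃ ^ 2 + b * z₃ + a))).coeff 2 = 0 ∧
    ((X + C (z₁ ^ 2 + b * z₁ + a)) * (X + C (z₂ ^ 2 + b * z₂ + a)) *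
        (X + C (z₃ ^ 2 + b * z₃ + a))).coeff 1 = 0 ∧
    ∃ c : ℂ,
      (X + C (z₁ ^ 2 + b * z₁ + a)) * (X + C (z₂ ^ 2 + b * z₂ + a)) *
        (X + C (z₃ ^ 2 + b * z₃ + a)) = X ^ 3 + C c := by
  have hdeg : (X ^ 3 + C m * X ^ 2 + C n * X + C p : ℂ[X]).natDegree = 3 := by
    compute_degree!
  have hmon : (X ^ 3 + C m * X ^ 2 + C n * X + C p : ℂ[X]).Monic := by
    monicity!
  have hcard : Multiset.card (X ^ 3 + C m * X ^ 2 + C n * X + C p : ℂ[X]).roots =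
      (X ^ 3 + C m * X ^ 2 + C n * X + C p : ℂ[X]).natDegree := by
    rw [hroots, hdeg]; simp
  have hprod := prod_multiset_X_sub_C_of_monic_of_roots_card_eq hmon hcard
  rw [hroots] at hprod
  have hprod' : (X - C z₁) * ((X - C z₂) * (X - C z₃)) =
      (X ^ 3 + C m * X ^ 2 + C n * X + C p : ℂ[X]) := by
    simpa using hprod
  have expand : ∀ u v w : ℂ, (X + C u) * (X + C v) * (X + C w) =
      (X ^ 3 + C (u + v + w) * X ^ 2 + C (u * v + u * w + v * w) * X + C (u * v * w) : ℂ[X]) := by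
    intro u v w
    simp only [C_add, C_mul]
    ring
  have hz : (X ^ 3 + C (-z₁ + -z₂ + -z₃) * X ^ 2 + C (-z₁ * -z₂ + -z₁ * -z₃ + -z₂ * -z₃) * X
      + C (-z₁ * -z₂ * -z₃) : ℂ[X]) = X ^ 3 + C m * X ^ 2 + C n * X + C p := by
    rw [← expand, ← hprod']
    simp only [C_neg]
    ring
  have h2 := congrArg (fun q : ℂ[X] => q.coeff 2) hz
  have h1 := congrArg (fun q : ℂ[X] => q.coeff 1) hz
  have h0 := congrArg (fun q : ℂ[X] => q.coeff 0) hz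
  simp [coeff_X, coeff_C, coeff_X_pow, -map_add, -map_mul, -map_neg] at h2 h1 h0
  have e1 : (z₁ ^ 2 + b * z₁ + a) + (z₂ ^ 2 + b * z₂ + a) + (z₃ ^ 2 + b * z₃ + a) = 0 := by
    subst ha h2 h1
    ring
  have e2 : (z₁ ^ 2 + b * z₁ + a) * (z₂ ^ 2 + b * z₂ + a) +
      (z₁ ^ 2 + b * z₁ + a) * (z₃ ^ 2 + b * z₃ + a) +
      (z₂ ^ 2 + b * z₂ + a) * (z₃ ^ 2 + b * z₃ + a) = 0 := by
    subst ha h2 h1 h0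
    linear_combination hb / 3
  rw [expand, e1, e2]
  refine ⟨?_, ?_, (z₁ ^ 2 + b * z₁ + a) * (z₂ ^ 2 + b * z₂ + a) * (z₃ ^ 2 + b * z₃ + a), ?_⟩
  · simp [coeff_X_pow, coeff_C, -map_add, -map_mul]
  · simp [coeff_X_pow, coeff_C, -map_add, -map_mul]
  · rw [C_0, zero_mul, zero_mul, add_zero, add_zero]
end

section
/- Let n, p, q ∈ ℂ, set a = n/2, and let b ∈ ℂ be any root of n·b² + 3p·b + n² + 2q − (3/2)·n² = 0. Let z₁, z₂, z₃, z₄ be the roots with multiplicity of X⁴ + nX² + pX + q over ℂ. Then the polynomial T(Y) = ∏ᵢ₌₁⁴ (Y + zᵢ² + b·zᵢ + a) has zero coefficient of Y³ and zero coefficient of Y². -/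
open Polynomial

/-- The coefficients of a product of four monic linear factors. -/
theorem prod_four_coeffs (u v w t : ℂ) :
    ((X + C u) * (X + C v) * (X + C w) * (X + C t)) =
      X ^ 4 + C (u + v + w + t) * X ^ 3 + C (u * v + u * w + u * t + v * w + v * t + w * t) * X ^ 2
        + C (u * v * w + u * v * t + u * w * t + v * w * t) * X + C (u * v * w * t) := by
  simp only [map_add, map_mul]
  ring

/-- Bring §VII: for the quartic `X⁴ + nX² + pX + q`, with `a = n/2` and `b`
any root of `nb² + 3pb + n² + 2q - (3/2)n² = 0`, the quadratic Tschirnhaus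
transform `T(Y) = ∏ᵢ (Y + zᵢ² + b·zᵢ + a)` loses its second and third
terms (the coefficients of `Y³` and `Y²` vanish). -/
theorem bring_quartic_remove_second_third (n p q : ℂ) (a : ℂ) (ha : a = n / 2)
    (b : ℂ)
    (hb : n * b ^ 2 + 3 * p * b + n ^ 2 + 2 * q - 3 / 2 * n ^ 2 = 0)
    (z₁ z₂ z₃ z₄ : ℂ)
    (hroots : (X ^ 4 + C n * X ^ 2 + C p * X + C q).roots = {z₁, z₂, z₃, z₄}) :
    ((X + C (z₁ ^ 2 + b * z₁ + a)) * (X + C (z₂ ^ 2 + b * z₂ + a)) *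
        (X + C (z₃ ^ 2 + b * z₃ + a)) * (X + C (z₄ ^ 2 + b * z₄ + a))).coeff 3 = 0 ∧
    ((X + C (z₁ ^ 2 + b * z₁ + a)) * (X + C (z₂ ^ 2 + b * z₂ + a)) *
        (X + C (z₃ ^ 2 + b * z₃ + a)) * (X + C (z₄ ^ 2 + b * z₄ + a))).coeff 2 = 0 := by
  have hdeg : (X ^ 4 + C n * X ^ 2 + C p * X + C q : ℂ[X]).natDegree = 4 := by compute_degree!
  have hmonic : (X ^ 4 + C n * X ^ 2 + C p * X + C q : ℂ[X]).Monic := by monicity!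
  have hprod := Polynomial.prod_multiset_X_sub_C_of_monic_of_roots_card_eq hmonic
    (by rw [hroots, hdeg]; rfl)
  rw [hroots] at hprod
  have hf : (X + C (-z₁)) * (X + C (-z₂)) * (X + C (-z₃)) * (X + C (-z₄))
      = X ^ 4 + C n * X ^ 2 + C p * X + C q := by
    rw [← hprod]
    simp [sub_eq_add_neg, mul_assoc]
  rw [prod_four_coeffs] at hf
  have h3 := congrArg (fun f : ℂ[X] => f.coeff 3) hf
  have h2 := congrArg (fun f : ℂ[X] => f.coeff 2) hf
  have h1 := congrArg (fun f : ℂ[X] => f.coeff 1) hf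
  have h0 := congrArg (fun f : ℂ[X] => f.coeff 0) hf
  simp [-map_add, -map_mul, -map_neg, coeff_X, coeff_C, coeff_X_pow] at h3 h2 h1 h0
  rw [prod_four_coeffs]
  simp only [coeff_add, coeff_C_mul, coeff_X_pow, coeff_X, coeff_C]
  norm_num
  have h4 : z₄ = -(z₁ + z₂ + z₃) := by linear_combination -h3
  subst ha
  subst h4
  subst h2
  subst h1
  subst h0
  constructor
  · ring
  · linear_combination hb
end

section
/- Let p, q, a, b ∈ ℂ and let z₁, z₂, z₃, z₄ be the roots with multiplicity of X⁴ + pX + q over ℂ. Then in the polynomial T(Y) = ∏ᵢ₌₁⁴ (Y + zᵢ² + b·zᵢ + a): the coefficient of Y³ equals 4a, the coefficient of Y² equals 6a² + 3pb + 2q, and the coefficient of Y¹ equals 4a³ + 4qa + 6abp + p² − pb³ − 4qb². -/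
open Polynomial

/-- Coefficients of a product of four monic linear factors. -/
lemma coeffs_four (u v w t : ℂ) :
    ((X + C u) * (X + C v) * (X + C w) * (X + C t)).coeff 3 = u + v + w + t ∧
    ((X + C u) * (X + C v) * (X + C w) * (X + C t)).coeff 2 =
      u * v + u * w + u * t + v * w + v * t + w * t ∧
    ((X + C u) * (X + C v) * (X + C w) * (X + C t)).coeff 1 =
      u * v * w + u * v * t + u * w * t + v * w * t ∧
    ((X + C u) * (X + C v) * (X + C w) * (X + C t)).coeff 0 = u * v * w * t := by
  have h : (X + C u) * (X + C v) * (X + C w) * (X + C t) =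
      X ^ 4 + C (u + v + w + t) * X ^ 3 +
      C (u * v + u * w + u * t + v * w + v * t + w * t) * X ^ 2 +
      C (u * v * w + u * v * t + u * w * t + v * w * t) * X + C (u * v * w * t) := by
    simp only [map_add, map_mul]
    ring
  rw [h]
  refine ⟨?_, ?_, ?_, ?_⟩ <;>
    simp [coeff_X, coeff_C, coeff_X_pow, -map_add, -map_mul]

/-- Bring §VII: for the quartic `X⁴ + pX + q` with roots `z₁, …, z₄` (with
multiplicity), the quadratic Tschirnhaus transform
`T(Y) = ∏ᵢ (Y + zᵢ² + b·zᵢ + a)` has coefficient `4a` of `Y³`, coefficient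
`6a² + 3pb + 2q` of `Y²`, and coefficient
`4a³ + 4qa + 6abp + p² - pb³ - 4qb²` of `Y`. -/
theorem bring_quartic_tschirnhaus_coeffs (p q a b z₁ z₂ z₃ z₄ : ℂ)
    (hroots : (X ^ 4 + C p * X + C q).roots = {z₁, z₂, z₃, z₄}) :
    ((X + C (z₁ ^ 2 + b * z₁ + a)) * (X + C (z₂ ^ 2 + b * z₂ + a)) *
        (X + C (z₃ ^ 2 + b * z₃ + a)) * (X + C (z₄ ^ 2 + b * z₄ + a))).coeff 3 =
      4 * a ∧
    ((X + C (z₁ ^ 2 + b * z₁ + a)) * (X + C (z₂ ^ 2 + b * z₂ + a)) *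
        (X + C (z₃ ^ 2 + b * z₃ + a)) * (X + C (z₄ ^ 2 + b * z₄ + a))).coeff 2 =
      6 * a ^ 2 + 3 * p * b + 2 * q ∧
    ((X + C (z₁ ^ 2 + b * z₁ + a)) * (X + C (z₂ ^ 2 + b * z₂ + a)) *
        (X + C (z₃ ^ 2 + b * z₃ + a)) * (X + C (z₄ ^ 2 + b * z₄ + a))).coeff 1 =
      4 * a ^ 3 + 4 * q * a + 6 * a * b * p + p ^ 2 - p * b ^ 3 - 4 * q * b ^ 2 := by
  have hm : (X ^ 4 + C p * X + C q : ℂ[X]).Monic := by monicity!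
  have hp := (IsAlgClosed.splits (X ^ 4 + C p * X + C q : ℂ[X])).eq_prod_roots_of_monic hm
  rw [hroots] at hp
  have hp2 : (X ^ 4 + C p * X + C q : ℂ[X]) =
      (X + C (-z₁)) * (X + C (-z₂)) * (X + C (-z₃)) * (X + C (-z₄)) := by
    rw [hp]
    simp [sub_eq_add_neg, mul_assoc]
  obtain ⟨h3, h2, h1, h0⟩ := coeffs_four (-z₁) (-z₂) (-z₃) (-z₄)
  rw [← hp2] at h3 h2 h1 h0
  simp [coeff_X, coeff_C, coeff_X_pow] at h3 h2 h1 h0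
  obtain ⟨g3, g2, g1, -⟩ := coeffs_four (z₁ ^ 2 + b * z₁ + a) (z₂ ^ 2 + b * z₂ + a)
    (z₃ ^ 2 + b * z₃ + a) (z₄ ^ 2 + b * z₄ + a)
  rw [g3, g2, g1]
  clear g3 g2 g1 hp hp2 hm hroots
  have e : z₄ = -(z₁ + z₂ + z₃) := by linear_combination h3
  subst e
  subst h1 h0
  refine ⟨?_, ?_, ?_⟩
  · grind
  · grind
  · grind
end

section
/- Let p, q ∈ ℂ and let b ∈ ℂ be any root of the cubic equation −p·b³ − 4q·b² + p² = 0. Let z₁, z₂, z₃, z₄ be the roots with multiplicity of X⁴ + pX + q over ℂ. Then the polynomial T(Y) = ∏ᵢ₌₁⁴ (Y + zᵢ² + b·zᵢ) has zero coefficient of Y³ and zero coefficient of Y¹; that is, T(Y) = Y⁴ + c₂Y² + c₀ for some c₂, c₀ ∈ ℂ, a quadratic in Y². In particular, the second and fourth terms of the quartic X⁴ + pX + q can be removed by a quadratic Tschirnhaus transformation whose parameter is found by solving only a cubic equation. -/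
open Polynomial

lemma bring_expand (a b c d : ℂ) :
    (X + C a) * (X + C b) * (X + C c) * (X + C d) =
      X ^ 4 + C (a + b + c + d) * X ^ 3
        + C (a * b + a * c + a * d + b * c + b * d + c * d) * X ^ 2
        + C (a * b * c + a * b * d + a * c * d + b * c * d) * X + C (a * b * c * d) := by
  simp only [map_add, map_mul]
  ring

lemma bring_coeffs (e₁ e₂ e₃ e₄ : ℂ) (P : ℂ[X])
    (h : P = X ^ 4 + C e₁ * X ^ 3 + C e₂ * X ^ 2 + C e₃ * X + C e₄) :
    P.coeff 3 = e₁ ∧ P.coeff 2 = e₂ ∧ P.coeff 1 = e₃ ∧ P.coeff 0 = e₄ := by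
  subst h
  refine ⟨?_, ?_, ?_, ?_⟩ <;> simp [coeff_X, coeff_C, coeff_X_pow]

/-- Bring §VII: if `b` is a root of the cubic `-pb³ - 4qb² + p² = 0`, then
the quadratic Tschirnhaus transform `T(Y) = ∏ᵢ (Y + zᵢ² + b·zᵢ)` of the
quartic `X⁴ + pX + q` loses its second and fourth terms, becoming a
quadratic in `Y²`: `T(Y) = Y⁴ + c₂Y² + c₀`. -/
theorem bring_quartic_remove_second_fourth (p q b : ℂ)
    (hb : -p * b ^ 3 - 4 * q * b ^ 2 + p ^ 2 = 0)
    (z₁ z₂ z₃ z₄ : ℂ)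
    (hroots : (X ^ 4 + C p * X + C q).roots = {z₁, z₂, z₃, z₄}) :
    ((X + C (z₁ ^ 2 + b * z₁)) * (X + C (z₂ ^ 2 + b * z₂)) *
        (X + C (z₃ ^ 2 + b * z₃)) * (X + C (z₄ ^ 2 + b * z₄))).coeff 3 = 0 ∧
    ((X + C (z₁ ^ 2 + b * z₁)) * (X + C (z₂ ^ 2 + b * z₂)) *
        (X + C (z₃ ^ 2 + b * z₃)) * (X + C (z₄ ^ 2 + b * z₄))).coeff 1 = 0 ∧
    ∃ c₂ c₀ : ℂ,
      (X + C (z₁ ^ 2 + b * z₁)) * (X + C (z₂ ^ 2 + b * z₂)) *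
        (X + C (z₃ ^ 2 + b * z₃)) * (X + C (z₄ ^ 2 + b * z₄)) =
      X ^ 4 + C c₂ * X ^ 2 + C c₀ := by
  have hdeg : (X ^ 4 + C p * X + C q : ℂ[X]).natDegree = 4 := by compute_degree!
  have hmonic : (X ^ 4 + C p * X + C q : ℂ[X]).Monic := by monicity!
  have hprod := prod_multiset_X_sub_C_of_monic_of_roots_card_eq hmonic
    (by rw [hroots, hdeg]; rfl)
  rw [hroots] at hprod
  have hP : (X ^ 4 + C p * X + C q : ℂ[X]) =
      (X + C (-z₁)) * (X + C (-z₂)) * (X + C (-z₃)) * (X + C (-z₄)) := by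
    rw [← hprod]
    simp only [Multiset.insert_eq_cons, Multiset.map_cons, Multiset.map_singleton,
      Multiset.prod_cons, Multiset.prod_singleton, map_neg]
    ring
  rw [bring_expand] at hP
  obtain ⟨h1, h2, h3, h4⟩ := bring_coeffs _ _ _ _ _ hP
  obtain ⟨g1, g2, g3, g4⟩ := bring_coeffs 0 0 p q (X ^ 4 + C p * X + C q) (by simp)
  rw [g1] at h1
  rw [g2] at h2
  rw [g3] at h3
  rw [g4] at h4
  have hE := bring_expand (z₁ ^ 2 + b * z₁) (z₂ ^ 2 + b * z₂) (z₃ ^ 2 + b * z₃) (z₄ ^ 2 + b * z₄)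
  obtain ⟨k1, -, k3, -⟩ := bring_coeffs _ _ _ _ _ hE
  have H1 : z₁ + z₂ + z₃ + z₄ = 0 := by linear_combination h1
  have H2 : z₁ * z₂ + z₁ * z₃ + z₁ * z₄ + z₂ * z₃ + z₂ * z₄ + z₃ * z₄ = 0 := by
    linear_combination -h2
  have H3 : z₁ * z₂ * z₃ + z₁ * z₂ * z₄ + z₁ * z₃ * z₄ + z₂ * z₃ * z₄ = -p := by
    linear_combination h3
  have H4 : z₁ * z₂ * z₃ * z₄ = q := by linear_combination -h4
  have E1 : (z₁ ^ 2 + b * z₁) + (z₂ ^ 2 + b * z₂) + (z₃ ^ 2 + b * z₃) + (z₄ ^ 2 + b * z₄) = 0 := by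
    linear_combination (z₁ + z₂ + z₃ + z₄ + b) * H1 - 2 * H2
  have E3 : (z₁ ^ 2 + b * z₁) * (z₂ ^ 2 + b * z₂) * (z₃ ^ 2 + b * z₃)
      + (z₁ ^ 2 + b * z₁) * (z₂ ^ 2 + b * z₂) * (z₄ ^ 2 + b * z₄)
      + (z₁ ^ 2 + b * z₁) * (z₃ ^ 2 + b * z₃) * (z₄ ^ 2 + b * z₄)
      + (z₂ ^ 2 + b * z₂) * (z₃ ^ 2 + b * z₃) * (z₄ ^ 2 + b * z₄) = 0 := by
    linear_combination hb
      + (b ^ 3 + (z₁ * z₂ * z₃ + z₁ * z₂ * z₄ + z₁ * z₃ * z₄ + z₂ * z₃ * z₄ - p)) * H3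
      + (b ^ 2 * (z₁ * z₂ * z₃ + z₁ * z₂ * z₄ + z₁ * z₃ * z₄ + z₂ * z₃ * z₄)
          - 3 * b * (z₁ * z₂ * z₃ * z₄)) * H1
      + (b * (z₁ * z₂ * z₃ + z₁ * z₂ * z₄ + z₁ * z₃ * z₄ + z₂ * z₃ * z₄)
          - 2 * (z₁ * z₂ * z₃ * z₄)) * H2
      - 4 * b ^ 2 * H4
  refine ⟨k1.trans E1, k3.trans E3, ?_⟩
  rw [E1, E3] at hE
  simp only [map_zero, zero_mul, add_zero] at hE
  exact ⟨_, _, hE⟩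
end

section
/- Let p, q, r, a, b, c, d ∈ ℂ and let z₁, …, z₅ be the roots with multiplicity of X⁵ + pX² + qX + r over ℂ. Then the coefficient of Y⁴ in T(Y) = ∏ᵢ₌₁⁵ (Y + zᵢ⁴ + d·zᵢ³ + c·zᵢ² + b·zᵢ + a) equals 5a − 3pd − 4q. In particular, the choice a = (3pd + 4q)/5 makes the coefficient of Y⁴ vanish. -/
open Polynomial

/-- The Tschirnhaus transform `T(Y) = ∏ᵢ (Y + zᵢ⁴ + d·zᵢ³ + c·zᵢ² + b·zᵢ + a)`
of a quintic with roots `z₁, …, z₅`, given by the quartic subsidiary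
equation `z⁴ + dz³ + cz² + bz + a + y = 0`. -/
noncomputable def bringQuinticTransform (a b c d z₁ z₂ z₃ z₄ z₅ : ℂ) :
    Polynomial ℂ :=
  (X + C (z₁ ^ 4 + d * z₁ ^ 3 + c * z₁ ^ 2 + b * z₁ + a)) *
  (X + C (z₂ ^ 4 + d * z₂ ^ 3 + c * z₂ ^ 2 + b * z₂ + a)) *
  (X + C (z₃ ^ 4 + d * z₃ ^ 3 + c * z₃ ^ 2 + b * z₃ + a)) *
  (X + C (z₄ ^ 4 + d * z₄ ^ 3 + c * z₄ ^ 2 + b * z₄ + a)) *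
  (X + C (z₅ ^ 4 + d * z₅ ^ 3 + c * z₅ ^ 2 + b * z₅ + a))

lemma prod_five_expand (u v w x y : ℂ) :
    (X + C u) * (X + C v) * (X + C w) * (X + C x) * (X + C y) =
      X ^ 5 + C (u + v + w + x + y) * X ^ 4 +
      C (u*v + u*w + u*x + u*y + v*w + v*x + v*y + w*x + w*y + x*y) * X ^ 3 +
      C (u*v*w + u*v*x + u*v*y + u*w*x + u*w*y + u*x*y + v*w*x + v*w*y + v*x*y + w*x*y) * X ^ 2 +
      C (u*v*w*x + u*v*w*y + u*v*x*y + u*w*x*y + v*w*x*y) * X +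
      C (u*v*w*x*y) := by
  simp only [C_add, C_mul]
  ring

lemma transform_coeff_four (a b c d z₁ z₂ z₃ z₄ z₅ : ℂ) :
    (bringQuinticTransform a b c d z₁ z₂ z₃ z₄ z₅).coeff 4 =
      (z₁ ^ 4 + z₂ ^ 4 + z₃ ^ 4 + z₄ ^ 4 + z₅ ^ 4) +
      d * (z₁ ^ 3 + z₂ ^ 3 + z₃ ^ 3 + z₄ ^ 3 + z₅ ^ 3) +
      c * (z₁ ^ 2 + z₂ ^ 2 + z₃ ^ 2 + z₄ ^ 2 + z₅ ^ 2) +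
      b * (z₁ + z₂ + z₃ + z₄ + z₅) + 5 * a := by
  rw [bringQuinticTransform, prod_five_expand]
  simp only [coeff_add, coeff_C_mul, coeff_X_pow, coeff_X, coeff_C]
  norm_num
  ring

/-- Bring §X: for the quintic `X⁵ + pX² + qX + r`, the coefficient of `Y⁴`
in the quartic Tschirnhaus transform equals `5a - 3pd - 4q`; in particular
`a = (3pd + 4q)/5` removes the second term. -/
theorem bring_quintic_coeff_four (p q r a b c d z₁ z₂ z₃ z₄ z₅ : ℂ)
    (hroots : (X ^ 5 + C p * X ^ 2 + C q * X + C r).roots =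
      {z₁, z₂, z₃, z₄, z₅}) :
    (bringQuinticTransform a b c d z₁ z₂ z₃ z₄ z₅).coeff 4 =
      5 * a - 3 * p * d - 4 * q ∧
    (bringQuinticTransform ((3 * p * d + 4 * q) / 5) b c d
      z₁ z₂ z₃ z₄ z₅).coeff 4 = 0 := by
  have hdeg : (X ^ 5 + C p * X ^ 2 + C q * X + C r : ℂ[X]).natDegree = 5 := by
    compute_degree!
  have hmonic : (X ^ 5 + C p * X ^ 2 + C q * X + C r : ℂ[X]).Monic := by
    monicity!
  have hprod := (IsAlgClosed.splits
    (X ^ 5 + C p * X ^ 2 + C q * X + C r : ℂ[X])).eq_prod_roots_of_monic hmonic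
  rw [hroots] at hprod
  have hE : (X ^ 5 + C p * X ^ 2 + C q * X + C r : ℂ[X]) =
      (X + C (-z₁)) * (X + C (-z₂)) * (X + C (-z₃)) * (X + C (-z₄)) * (X + C (-z₅)) := by
    rw [hprod]
    simp [sub_eq_add_neg, mul_assoc]
  rw [prod_five_expand] at hE
  have h4 := congrArg (fun f => coeff f 4) hE
  have h3 := congrArg (fun f => coeff f 3) hE
  have h2 := congrArg (fun f => coeff f 2) hE
  have h1 := congrArg (fun f => coeff f 1) hE
  simp only [coeff_add, coeff_C_mul, coeff_X_pow, coeff_X, coeff_C] at h4 h3 h2 h1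
  norm_num at h4 h3 h2 h1
  have e1 : z₁ + z₂ + z₃ + z₄ + z₅ = 0 := by linear_combination h4
  have e5 : z₅ = -(z₁ + z₂ + z₃ + z₄) := by linear_combination e1
  have P2 : z₁ ^ 2 + z₂ ^ 2 + z₃ ^ 2 + z₄ ^ 2 + z₅ ^ 2 = 0 := by
    subst e5; linear_combination 2 * h3
  have P3 : z₁ ^ 3 + z₂ ^ 3 + z₃ ^ 3 + z₄ ^ 3 + z₅ ^ 3 = -3 * p := by
    subst e5; linear_combination 3 * h2
  have P4 : z₁ ^ 4 + z₂ ^ 4 + z₃ ^ 4 + z₄ ^ 4 + z₅ ^ 4 = -4 * q := by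
    have hq := h1
    set E2 := z₁*z₂ + z₁*z₃ + z₁*z₄ + z₁*z₅ + z₂*z₃ + z₂*z₄ + z₂*z₅ + z₃*z₄ + z₃*z₅ + z₄*z₅ with hE2
    have hE20 : E2 = 0 := by rw [hE2]; linear_combination -h3
    have : z₁ ^ 4 + z₂ ^ 4 + z₃ ^ 4 + z₄ ^ 4 + z₅ ^ 4 = 2 * E2 ^ 2 - 4 * q := by
      rw [hq, hE2]; subst e5; ring
    rw [this, hE20]; ring
  constructor
  · rw [transform_coeff_four, P4, P3, P2, e1]; ring
  · rw [transform_coeff_four, P4, P3, P2, e1]; ring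
end

section
/- Let p, q, r, b, c, d ∈ ℂ, set a = (3pd + 4q)/5, and let z₁, …, z₅ be the roots with multiplicity of X⁵ + pX² + qX + r over ℂ. Then five times the coefficient of Y³ in T(Y) = ∏ᵢ₌₁⁵ (Y + zᵢ⁴ + d·zᵢ³ + c·zᵢ² + b·zᵢ + a) equals 15pbc + 20qbd + 25rb + 10qc² + 25rcd − 15p²c − 3p²d² − 23pqd − 2q² − 20rp. -/
open Polynomial

theorem quintic_factor (p q r z₁ z₂ z₃ z₄ z₅ : ℂ)
    (hroots : (X ^ 5 + C p * X ^ 2 + C q * X + C r).roots =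
      {z₁, z₂, z₃, z₄, z₅}) :
    (X ^ 5 + C p * X ^ 2 + C q * X + C r : Polynomial ℂ) =
      (X - C z₁) * (X - C z₂) * (X - C z₃) * (X - C z₄) * (X - C z₅) := by
  have hm : (X ^ 5 + C p * X ^ 2 + C q * X + C r : Polynomial ℂ).Monic := by
    monicity!
  have h := (IsAlgClosed.splits (X ^ 5 + C p * X ^ 2 + C q * X + C r : Polynomial ℂ)).eq_prod_roots
  rw [hm.leadingCoeff, hroots] at h
  rw [h]
  simp [mul_assoc]

theorem quintic_expand (z₁ z₂ z₃ z₄ z₅ : ℂ) :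
    (X + C z₁) * (X + C z₂) * (X + C z₃) * (X + C z₄) * (X + C z₅) =
      X ^ 5 + C (z₁ + z₂ + z₃ + z₄ + z₅) * X ^ 4 +
      C (z₁ * z₂ + z₁ * z₃ + z₁ * z₄ + z₁ * z₅ + z₂ * z₃ + z₂ * z₄ + z₂ * z₅ +
        z₃ * z₄ + z₃ * z₅ + z₄ * z₅) * X ^ 3 +
      C (z₁ * z₂ * z₃ + z₁ * z₂ * z₄ + z₁ * z₂ * z₅ + z₁ * z₃ * z₄ + z₁ * z₃ * z₅ +
        z₁ * z₄ * z₅ + z₂ * z₃ * z₄ + z₂ * z₃ * z₅ + z₂ * z₄ * z₅ + z₃ * z₄ * z₅) * X ^ 2 +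
      C (z₁ * z₂ * z₃ * z₄ + z₁ * z₂ * z₃ * z₅ + z₁ * z₂ * z₄ * z₅ + z₁ * z₃ * z₄ * z₅ +
        z₂ * z₃ * z₄ * z₅) * X + C (z₁ * z₂ * z₃ * z₄ * z₅) := by
  simp only [C_add, C_mul]
  ring

/-- Bring §X, equation E: for the quintic `X⁵ + pX² + qX + r` and
`a = (3pd + 4q)/5`, five times the coefficient of `Y³` in the quartic
Tschirnhaus transform equals
`15pbc + 20qbd + 25rb + 10qc² + 25rcd − 15p²c − 3p²d² − 23pqd − 2q² − 20rp`. -/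
theorem bring_quintic_coeff_three (p q r b c d : ℂ) (a : ℂ)
    (ha : a = (3 * p * d + 4 * q) / 5) (z₁ z₂ z₃ z₄ z₅ : ℂ)
    (hroots : (X ^ 5 + C p * X ^ 2 + C q * X + C r).roots =
      {z₁, z₂, z₃, z₄, z₅}) :
    5 * (bringQuinticTransform a b c d z₁ z₂ z₃ z₄ z₅).coeff 3 =
      15 * p * b * c + 20 * q * b * d + 25 * r * b + 10 * q * c ^ 2 +
        25 * r * c * d - 15 * p ^ 2 * c - 3 * p ^ 2 * d ^ 2 -
        23 * p * q * d - 2 * q ^ 2 - 20 * r * p := by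
  have hf := quintic_factor p q r z₁ z₂ z₃ z₄ z₅ hroots
  have hz : ∀ z : ℂ, (z - z₁) * (z - z₂) * (z - z₃) * (z - z₄) * (z - z₅) = 0 →
      z ^ 5 = -(p * z ^ 2 + q * z + r) := by
    intro z h
    have := congrArg (Polynomial.eval z) hf
    simp only [eval_add, eval_mul, eval_sub, eval_pow, eval_X, eval_C] at this
    linear_combination this + h
  have h1 := hz z₁ (by ring)
  have h2 := hz z₂ (by ring)
  have h3 := hz z₃ (by ring)
  have h4 := hz z₄ (by ring)
  have h5 := hz z₅ (by ring)
  clear hz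
  simp only [sub_eq_add_neg, ← C_neg] at hf
  rw [quintic_expand] at hf
  have k4 := congrArg (fun f => coeff f 4) hf
  have k3 := congrArg (fun f => coeff f 3) hf
  have k2 := congrArg (fun f => coeff f 2) hf
  have k1 := congrArg (fun f => coeff f 1) hf
  simp [coeff_X, coeff_C, coeff_X_pow, -C_add, -C_mul, -C_neg, -map_add, -map_mul, -map_neg] at k4 k3 k2 k1
  have e1 : z₁ + z₂ + z₃ + z₄ + z₅ = 0 := by linear_combination k4
  have e2 : z₁ * z₂ + z₁ * z₃ + z₁ * z₄ + z₁ * z₅ + z₂ * z₃ + z₂ * z₄ + z₂ * z₅ +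
        z₃ * z₄ + z₃ * z₅ + z₄ * z₅ = 0 := by linear_combination -k3
  have e3 : z₁ * z₂ * z₃ + z₁ * z₂ * z₄ + z₁ * z₂ * z₅ + z₁ * z₃ * z₄ + z₁ * z₃ * z₅ +
        z₁ * z₄ * z₅ + z₂ * z₃ * z₄ + z₂ * z₃ * z₅ + z₂ * z₄ * z₅ + z₃ * z₄ * z₅ = -p := by
    linear_combination k2
  have e4 : z₁ * z₂ * z₃ * z₄ + z₁ * z₂ * z₃ * z₅ + z₁ * z₂ * z₄ * z₅ + z₁ * z₃ * z₄ * z₅ +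
        z₂ * z₃ * z₄ * z₅ = q := by linear_combination -k1
  clear k1 k2 k3 k4 hf hroots
  have s2 : z₁ ^ 2 + z₂ ^ 2 + z₃ ^ 2 + z₄ ^ 2 + z₅ ^ 2 = 0 := by
    linear_combination (z₁ + z₂ + z₃ + z₄ + z₅) * e1 - 2 * e2
  have s3 : z₁ ^ 3 + z₂ ^ 3 + z₃ ^ 3 + z₄ ^ 3 + z₅ ^ 3 = -3 * p := by
    linear_combination (z₁ + z₂ + z₃ + z₄ + z₅) * s2 -
      (z₁ + z₂ + z₃ + z₄ + z₅) * e2 + 3 * e3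
  have s4 : z₁ ^ 4 + z₂ ^ 4 + z₃ ^ 4 + z₄ ^ 4 + z₅ ^ 4 = -4 * q := by
    linear_combination (z₁ ^ 3 + z₂ ^ 3 + z₃ ^ 3 + z₄ ^ 3 + z₅ ^ 3) * e1 -
      (z₁ ^ 2 + z₂ ^ 2 + z₃ ^ 2 + z₄ ^ 2 + z₅ ^ 2) * e2 +
      (z₁ * z₂ * z₃ + z₁ * z₂ * z₄ + z₁ * z₂ * z₅ + z₁ * z₃ * z₄ + z₁ * z₃ * z₅ +
        z₁ * z₄ * z₅ + z₂ * z₃ * z₄ + z₂ * z₃ * z₅ + z₂ * z₄ * z₅ + z₃ * z₄ * z₅) * e1 - 4 * e4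
  have s5 : z₁ ^ 5 + z₂ ^ 5 + z₃ ^ 5 + z₄ ^ 5 + z₅ ^ 5 = -5 * r := by
    linear_combination h1 + h2 + h3 + h4 + h5 - p * s2 - q * e1
  have s6 : z₁ ^ 6 + z₂ ^ 6 + z₃ ^ 6 + z₄ ^ 6 + z₅ ^ 6 = 3 * p ^ 2 := by
    linear_combination z₁ * h1 + z₂ * h2 + z₃ * h3 + z₄ * h4 + z₅ * h5 - p * s3 - q * s2 - r * e1
  have s7 : z₁ ^ 7 + z₂ ^ 7 + z₃ ^ 7 + z₄ ^ 7 + z₅ ^ 7 = 7 * p * q := by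
    linear_combination z₁ ^ 2 * h1 + z₂ ^ 2 * h2 + z₃ ^ 2 * h3 + z₄ ^ 2 * h4 + z₅ ^ 2 * h5 -
      p * s4 - q * s3 - r * s2
  have s8 : z₁ ^ 8 + z₂ ^ 8 + z₃ ^ 8 + z₄ ^ 8 + z₅ ^ 8 = 8 * p * r + 4 * q ^ 2 := by
    linear_combination z₁ ^ 3 * h1 + z₂ ^ 3 * h2 + z₃ ^ 3 * h3 + z₄ ^ 3 * h4 + z₅ ^ 3 * h5 -
      p * s5 - q * s4 - r * s3
  have ha' : 5 * a = 3 * p * d + 4 * q := by rw [ha]; ring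
  obtain ⟨w, hw⟩ : ∃ w : ℂ → ℂ, ∀ z, w z = z ^ 4 + d * z ^ 3 + c * z ^ 2 + b * z + a :=
    ⟨_, fun _ => rfl⟩
  have hS1 : w z₁ + w z₂ + w z₃ + w z₄ + w z₅ = 0 := by
    simp only [hw]
    linear_combination s4 + d * s3 + c * s2 + b * e1 + ha'
  have hS2 : w z₁ ^ 2 + w z₂ ^ 2 + w z₃ ^ 2 + w z₄ ^ 2 + w z₅ ^ 2 =
      (8 * p * r + 4 * q ^ 2) + 2 * d * (7 * p * q) + (d ^ 2 + 2 * c) * (3 * p ^ 2) +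
      (2 * b + 2 * c * d) * (-5 * r) + (2 * a + 2 * b * d + c ^ 2) * (-4 * q) +
      (2 * a * d + 2 * b * c) * (-3 * p) + 5 * a ^ 2 := by
    simp only [hw]
    linear_combination s8 + 2 * d * s7 + (d ^ 2 + 2 * c) * s6 + (2 * b + 2 * c * d) * s5 +
      (2 * a + 2 * b * d + c ^ 2) * s4 + (2 * a * d + 2 * b * c) * s3 +
      (2 * a * c + b ^ 2) * s2 + 2 * a * b * e1
  unfold bringQuinticTransform
  simp only [← hw]
  rw [quintic_expand]
  simp [coeff_X, coeff_C, coeff_X_pow, -C_add, -C_mul, -map_add, -map_mul]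
  subst ha
  linear_combination (5 / 2) * (w z₁ + w z₂ + w z₃ + w z₄ + w z₅) * hS1 - (5 / 2) * hS2
end

section
/- Let p, q, r ∈ ℂ with 15p + 20q ≠ 0, set α = (3p² − 10q − 25r)/(15p + 20q), and suppose ζ, γ ∈ ℂ satisfy the linear relation (15p + 20q)·ζ + (15pα + 20q + 25r)·γ = −25rα + 15p² + 23pq together with the quadratic relation 10q·γ² + (15pζ − 15p²)·γ + 25rζ − 2q² − 20rp = 0. Then for EVERY d ∈ ℂ, setting a = (3pd + 4q)/5, b = αd + ζ, c = d + γ, and letting z₁, …, z₅ be the roots with multiplicity of X⁵ + pX² + qX + r over ℂ, the coefficient of Y³ in T(Y) = ∏ᵢ₌₁⁵ (Y + zᵢ⁴ + d·zᵢ³ + c·zᵢ² + b·zᵢ + a) is zero. -/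
open Polynomial

/-- Expansion of a product of five linear factors. -/
theorem five_expand (w₁ w₂ w₃ w₄ w₅ : ℂ) :
    (X + C w₁) * (X + C w₂) * (X + C w₃) * (X + C w₄) * (X + C w₅) =
      X ^ 5 + C (w₁ + w₂ + w₃ + w₄ + w₅) * X ^ 4
      + C (w₁*w₂ + w₁*w₃ + w₁*w₄ + w₁*w₅ + w₂*w₃ + w₂*w₄ + w₂*w₅ + w₃*w₄ + w₃*w₅ + w₄*w₅) * X ^ 3
      + C (w₁*w₂*w₃ + w₁*w₂*w₄ + w₁*w₂*w₅ + w₁*w₃*w₄ + w₁*w₃*w₅ + w₁*w₄*w₅ + w₂*w₃*w₄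
          + w₂*w₃*w₅ + w₂*w₄*w₅ + w₃*w₄*w₅) * X ^ 2
      + C (w₁*w₂*w₃*w₄ + w₁*w₂*w₃*w₅ + w₁*w₂*w₄*w₅ + w₁*w₃*w₄*w₅ + w₂*w₃*w₄*w₅) * X
      + C (w₁*w₂*w₃*w₄*w₅) := by
  simp only [map_add, map_mul]
  ring

/-- Bring §XI: with `α = (3p² − 10q − 25r)/(15p + 20q)` and `ζ, γ` chosen to
satisfy a linear and a quadratic relation, for every `d`, taking
`a = (3pd + 4q)/5`, `b = αd + ζ`, `c = d + γ`, the coefficient of `Y³` in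
the quartic Tschirnhaus transform of `X⁵ + pX² + qX + r` vanishes. -/
theorem bring_quintic_remove_third_term (p q r : ℂ)
    (hden : 15 * p + 20 * q ≠ 0) (α : ℂ)
    (hα : α = (3 * p ^ 2 - 10 * q - 25 * r) / (15 * p + 20 * q)) (ζ γ : ℂ)
    (hlin : (15 * p + 20 * q) * ζ + (15 * p * α + 20 * q + 25 * r) * γ =
      -25 * r * α + 15 * p ^ 2 + 23 * p * q)
    (hquad : 10 * q * γ ^ 2 + (15 * p * ζ - 15 * p ^ 2) * γ + 25 * r * ζ -
      2 * q ^ 2 - 20 * r * p = 0)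
    (z₁ z₂ z₃ z₄ z₅ : ℂ)
    (hroots : (X ^ 5 + C p * X ^ 2 + C q * X + C r).roots =
      {z₁, z₂, z₃, z₄, z₅}) :
    ∀ d : ℂ,
      (bringQuinticTransform ((3 * p * d + 4 * q) / 5) (α * d + ζ) (d + γ) d
        z₁ z₂ z₃ z₄ z₅).coeff 3 = 0 := by
  intro d
  have hdeg : (X ^ 5 + C p * X ^ 2 + C q * X + C r : ℂ[X]).natDegree = 5 := by
    compute_degree!
  have hmon : (X ^ 5 + C p * X ^ 2 + C q * X + C r : ℂ[X]).Monic := by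
    rw [Monic, leadingCoeff, hdeg]
    simp [coeff_X, coeff_C, coeff_X_pow]
  have hprod := (IsAlgClosed.splits
    (X ^ 5 + C p * X ^ 2 + C q * X + C r : ℂ[X])).eq_prod_roots_of_monic hmon
  rw [hroots] at hprod
  have hprod2 : (X ^ 5 + C p * X ^ 2 + C q * X + C r : ℂ[X]) =
      (X + C (-z₁)) * (X + C (-z₂)) * (X + C (-z₃)) * (X + C (-z₄)) * (X + C (-z₅)) := by
    rw [hprod]
    simp only [Multiset.insert_eq_cons, Multiset.map_cons, Multiset.prod_cons,
      Multiset.map_singleton, Multiset.prod_singleton, map_neg]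
    ring
  rw [five_expand] at hprod2
  have h4 := congrArg (fun f => coeff f 4) hprod2
  have h3 := congrArg (fun f => coeff f 3) hprod2
  have h2 := congrArg (fun f => coeff f 2) hprod2
  have h1 := congrArg (fun f => coeff f 1) hprod2
  simp only [coeff_add, coeff_C_mul, coeff_X_pow, coeff_X, coeff_C] at h4 h3 h2 h1
  norm_num at h4 h3 h2 h1
  have hz : ∀ z ∈ ({z₁, z₂, z₃, z₄, z₅} : Multiset ℂ), z ^ 5 = -p * z ^ 2 - q * z - r := by
    intro z hz
    rw [← hroots, mem_roots hmon.ne_zero] at hz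
    simp [IsRoot] at hz
    linear_combination hz
  have k1 := hz z₁ (by simp)
  have k2 := hz z₂ (by simp)
  have k3 := hz z₃ (by simp)
  have k4 := hz z₄ (by simp)
  have k5 := hz z₅ (by simp)
  clear hz hprod hprod2 hmon hdeg hroots
  have hα2 : α * (15 * p + 20 * q) = 3 * p ^ 2 - 10 * q - 25 * r := by
    rw [hα, div_mul_cancel₀ _ hden]
  have p1 : z₁ + z₂ + z₃ + z₄ + z₅ = 0 := by linear_combination h4
  have p2 : z₁^2 + z₂^2 + z₃^2 + z₄^2 + z₅^2 = 0 := by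
    linear_combination (z₁ + z₂ + z₃ + z₄ + z₅) * p1 + 2 * h3
  have p3 : z₁^3 + z₂^3 + z₃^3 + z₄^3 + z₅^3 = -3 * p := by
    linear_combination (z₁^2 + z₂^2 + z₃^2 + z₄^2 + z₅^2) * p1 +
      (z₁ + z₂ + z₃ + z₄ + z₅) * h3 + 3 * h2
  have p4 : z₁^4 + z₂^4 + z₃^4 + z₄^4 + z₅^4 = -4 * q := by
    linear_combination (z₁^3 + z₂^3 + z₃^3 + z₄^3 + z₅^3) * p1 +
      (z₁^2 + z₂^2 + z₃^2 + z₄^2 + z₅^2) * h3 + (z₁ + z₂ + z₃ + z₄ + z₅) * h2 + 4 * h1 - p * p1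
  have p5 : z₁^5 + z₂^5 + z₃^5 + z₄^5 + z₅^5 = -5 * r := by
    linear_combination k1 + k2 + k3 + k4 + k5 - p * p2 - q * p1
  have p6 : z₁^6 + z₂^6 + z₃^6 + z₄^6 + z₅^6 = 3 * p ^ 2 := by
    linear_combination z₁ * k1 + z₂ * k2 + z₃ * k3 + z₄ * k4 + z₅ * k5 - p * p3 - q * p2 - r * p1
  have p7 : z₁^7 + z₂^7 + z₃^7 + z₄^7 + z₅^7 = 7 * p * q := by
    linear_combination z₁^2 * k1 + z₂^2 * k2 + z₃^2 * k3 + z₄^2 * k4 + z₅^2 * k5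
      - p * p4 - q * p3 - r * p2
  have p8 : z₁^8 + z₂^8 + z₃^8 + z₄^8 + z₅^8 = 8 * p * r + 4 * q ^ 2 := by
    linear_combination z₁^3 * k1 + z₂^3 * k2 + z₃^3 * k3 + z₄^3 * k4 + z₅^3 * k5
      - p * p5 - q * p4 - r * p3
  rw [bringQuinticTransform, five_expand]
  simp only [coeff_add, coeff_C_mul, coeff_X_pow, coeff_X, coeff_C]
  norm_num
  obtain ⟨a, ha⟩ : ∃ a, a = (3 * p * d + 4 * q) / 5 := ⟨_, rfl⟩
  obtain ⟨b, hb⟩ : ∃ b, b = α * d + ζ := ⟨_, rfl⟩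
  obtain ⟨c, hc⟩ : ∃ c, c = d + γ := ⟨_, rfl⟩
  rw [← ha, ← hb, ← hc]
  obtain ⟨w₁, e₁⟩ : ∃ w, w = z₁ ^ 4 + d * z₁ ^ 3 + c * z₁ ^ 2 + b * z₁ + a := ⟨_, rfl⟩
  obtain ⟨w₂, e₂⟩ : ∃ w, w = z₂ ^ 4 + d * z₂ ^ 3 + c * z₂ ^ 2 + b * z₂ + a := ⟨_, rfl⟩
  obtain ⟨w₃, e₃⟩ : ∃ w, w = z₃ ^ 4 + d * z₃ ^ 3 + c * z₃ ^ 2 + b * z₃ + a := ⟨_, rfl⟩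
  obtain ⟨w₄, e₄⟩ : ∃ w, w = z₄ ^ 4 + d * z₄ ^ 3 + c * z₄ ^ 2 + b * z₄ + a := ⟨_, rfl⟩
  obtain ⟨w₅, e₅⟩ : ∃ w, w = z₅ ^ 4 + d * z₅ ^ 3 + c * z₅ ^ 2 + b * z₅ + a := ⟨_, rfl⟩
  have s1 : w₁ + w₂ + w₃ + w₄ + w₅ = 0 := by
    rw [e₁, e₂, e₃, e₄, e₅]
    linear_combination p4 + d * p3 + c * p2 + b * p1 + 5 * ha
  have s2 : w₁^2 + w₂^2 + w₃^2 + w₄^2 + w₅^2 = 0 := by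
    have : w₁^2 + w₂^2 + w₃^2 + w₄^2 + w₅^2 =
        (8 * p * r + 4 * q ^ 2) + 2 * d * (7 * p * q) + (d^2 + 2 * c) * (3 * p^2)
        + (2 * b + 2 * d * c) * (-5 * r) + (c^2 + 2 * b * d + 2 * a) * (-4 * q)
        + (2 * b * c + 2 * a * d) * (-3 * p) + 5 * a^2 := by
      rw [e₁, e₂, e₃, e₄, e₅]
      linear_combination p8 + 2 * d * p7 + (d^2 + 2 * c) * p6 + (2 * b + 2 * d * c) * p5
        + (c^2 + 2 * b * d + 2 * a) * p4 + (2 * b * c + 2 * a * d) * p3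
        + (b^2 + 2 * a * c) * p2 + 2 * a * b * p1
    rw [this, ha, hb, hc]
    linear_combination (-2/5 * d^2) * hα2 - 2/5 * d * hlin - 2/5 * hquad
  rw [← e₁, ← e₂, ← e₃, ← e₄, ← e₅]
  linear_combination (w₁ + w₂ + w₃ + w₄ + w₅) / 2 * s1 - s2 / 2
end

section
/- (Bring's reduction.) Let p, q, r ∈ ℂ with 15p + 20q ≠ 0, set α = (3p² − 10q − 25r)/(15p + 20q), and suppose ζ, γ ∈ ℂ satisfy (15p + 20q)·ζ + (15pα + 20q + 25r)·γ = −25rα + 15p² + 23pq and 10q·γ² + (15pζ − 15p²)·γ + 25rζ − 2q² − 20rp = 0. Let z₁, …, z₅ be the roots with multiplicity of X⁵ + pX² + qX + r over ℂ, and suppose d ∈ ℂ is such that, with a = (3pd + 4q)/5, b = αd + ζ, c = d + γ, the coefficient of Y² in T(Y) = ∏ᵢ₌₁⁵ (Y + zᵢ⁴ + d·zᵢ³ + c·zᵢ² + b·zᵢ + a) vanishes. Then T(Y) = Y⁵ + P·Y + Q for some P, Q ∈ ℂ; that is, the three intermediate terms of the quintic are simultaneously removed. -/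
open Polynomial

theorem prod_expand (a b c d e : ℂ) :
    (X + C a) * (X + C b) * (X + C c) * (X + C d) * (X + C e) =
      X ^ 5 + C (a + b + c + d + e) * X ^ 4
      + C (a*b + a*c + a*d + a*e + b*c + b*d + b*e + c*d + c*e + d*e) * X ^ 3
      + C (a*b*c + a*b*d + a*b*e + a*c*d + a*c*e + a*d*e + b*c*d + b*c*e + b*d*e + c*d*e) * X ^ 2
      + C (a*b*c*d + a*b*c*e + a*b*d*e + a*c*d*e + b*c*d*e) * X
      + C (a*b*c*d*e) := by
  simp only [C_add, C_mul]
  ring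

theorem quintic_coeffs (A B D E F A' B' D' E' F' : ℂ)
    (h : (X ^ 5 + C A * X ^ 4 + C B * X ^ 3 + C D * X ^ 2 + C E * X + C F : ℂ[X]) =
      X ^ 5 + C A' * X ^ 4 + C B' * X ^ 3 + C D' * X ^ 2 + C E' * X + C F') :
    A = A' ∧ B = B' ∧ D = D' ∧ E = E' ∧ F = F' := by
  have h0 := congrArg (fun f => coeff f 0) h
  have h1 := congrArg (fun f => coeff f 1) h
  have h2 := congrArg (fun f => coeff f 2) h
  have h3 := congrArg (fun f => coeff f 3) h
  have h4 := congrArg (fun f => coeff f 4) h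
  simp [coeff_X, coeff_C, coeff_X_pow] at h0 h1 h2 h3 h4
  exact ⟨h4, h3, h2, h1, h0⟩

theorem coeff_two_quintic (A B D E F : ℂ) :
    (X ^ 5 + C A * X ^ 4 + C B * X ^ 3 + C D * X ^ 2 + C E * X + C F : ℂ[X]).coeff 2 = D := by
  simp [coeff_X_pow]

theorem vieta (p q r v w x y z : ℂ)
    (hroots : (X ^ 5 + C p * X ^ 2 + C q * X + C r).roots = {v, w, x, y, z}) :
    v + w + x + y + z = 0 ∧
    v*w + v*x + v*y + v*z + w*x + w*y + w*z + x*y + x*z + y*z = 0 ∧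
    v*w*x + v*w*y + v*w*z + v*x*y + v*x*z + v*y*z + w*x*y + w*x*z + w*y*z + x*y*z = -p ∧
    v*w*x*y + v*w*x*z + v*w*y*z + v*x*y*z + w*x*y*z = q ∧
    v*w*x*y*z = -r := by
  have hm : (X ^ 5 + C p * X ^ 2 + C q * X + C r : ℂ[X]).Monic := by monicity!
  have h := (IsAlgClosed.splits (X ^ 5 + C p * X ^ 2 + C q * X + C r : ℂ[X])).eq_prod_roots_of_monic hm
  rw [hroots] at h
  have h' : (X ^ 5 + C 0 * X ^ 4 + C 0 * X ^ 3 + C p * X ^ 2 + C q * X + C r : ℂ[X]) =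
      (X + C (-v)) * (X + C (-w)) * (X + C (-x)) * (X + C (-y)) * (X + C (-z)) := by
    simp only [C_0, zero_mul, add_zero, C_neg, ← sub_eq_add_neg]
    rw [h]
    simp [mul_assoc]
  rw [prod_expand] at h'
  obtain ⟨h4, h3, h2, h1, h0⟩ := quintic_coeffs _ _ _ _ _ _ _ _ _ _ h'
  refine ⟨?_, ?_, ?_, ?_, ?_⟩
  · linear_combination h4
  · linear_combination -h3
  · linear_combination h2
  · linear_combination -h1
  · linear_combination h0

theorem root_eq (p q r v w x y z t : ℂ)
    (hroots : (X ^ 5 + C p * X ^ 2 + C q * X + C r).roots = {v, w, x, y, z})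
    (ht : t ∈ ({v, w, x, y, z} : Multiset ℂ)) : t ^ 5 = -(p * t ^ 2 + q * t + r) := by
  rw [← hroots] at ht
  have := (mem_roots'.1 ht).2
  simp [IsRoot] at this
  linear_combination this

/-- Bring's reduction (§XI): with `α, ζ, γ` chosen by solving equations of
degree at most two, and `d` chosen so that the coefficient of `Y²` of the
transform vanishes, the quartic Tschirnhaus transform of `X⁵ + pX² + qX + r`
with `a = (3pd + 4q)/5`, `b = αd + ζ`, `c = d + γ` takes the Bring–Jerrard
form `Y⁵ + P·Y + Q`. -/
theorem bring_reduction (p q r : ℂ) (hden : 15 * p + 20 * q ≠ 0) (α : ℂ)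
    (hα : α = (3 * p ^ 2 - 10 * q - 25 * r) / (15 * p + 20 * q)) (ζ γ : ℂ)
    (hlin : (15 * p + 20 * q) * ζ + (15 * p * α + 20 * q + 25 * r) * γ =
      -25 * r * α + 15 * p ^ 2 + 23 * p * q)
    (hquad : 10 * q * γ ^ 2 + (15 * p * ζ - 15 * p ^ 2) * γ + 25 * r * ζ -
      2 * q ^ 2 - 20 * r * p = 0)
    (z₁ z₂ z₃ z₄ z₅ : ℂ)
    (hroots : (X ^ 5 + C p * X ^ 2 + C q * X + C r).roots =
      {z₁, z₂, z₃, z₄, z₅})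
    (d a b c : ℂ) (ha : a = (3 * p * d + 4 * q) / 5) (hb : b = α * d + ζ)
    (hc : c = d + γ)
    (hd : (bringQuinticTransform a b c d z₁ z₂ z₃ z₄ z₅).coeff 2 = 0) :
    ∃ P Q : ℂ,
      bringQuinticTransform a b c d z₁ z₂ z₃ z₄ z₅ =
        X ^ 5 + C P * X + C Q := by
  obtain ⟨e1, e2, e3, e4, e5⟩ := vieta _ _ _ _ _ _ _ _ hroots
  have r1 := root_eq _ _ _ _ _ _ _ _ z₁ hroots (by simp)
  have r2 := root_eq _ _ _ _ _ _ _ _ z₂ hroots (by simp)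
  have r3 := root_eq _ _ _ _ _ _ _ _ z₃ hroots (by simp)
  have r4 := root_eq _ _ _ _ _ _ _ _ z₄ hroots (by simp)
  have r5 := root_eq _ _ _ _ _ _ _ _ z₅ hroots (by simp)
  have s2 : z₁ ^ 2 + z₂ ^ 2 + z₃ ^ 2 + z₄ ^ 2 + z₅ ^ 2 = 0 := by
    linear_combination (z₁ + z₂ + z₃ + z₄ + z₅) * e1 - 2 * e2
  have s3 : z₁ ^ 3 + z₂ ^ 3 + z₃ ^ 3 + z₄ ^ 3 + z₅ ^ 3 = -3 * p := by
    linear_combination (z₁ ^ 2 + z₂ ^ 2 + z₃ ^ 2 + z₄ ^ 2 + z₅ ^ 2) * e1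
      - (z₁ + z₂ + z₃ + z₄ + z₅) * e2 + 3 * e3
  have s4 : z₁ ^ 4 + z₂ ^ 4 + z₃ ^ 4 + z₄ ^ 4 + z₅ ^ 4 = -4 * q := by
    linear_combination (z₁ ^ 3 + z₂ ^ 3 + z₃ ^ 3 + z₄ ^ 3 + z₅ ^ 3) * e1
      - (z₁ ^ 2 + z₂ ^ 2 + z₃ ^ 2 + z₄ ^ 2 + z₅ ^ 2) * e2
      + (z₁ + z₂ + z₃ + z₄ + z₅) * e3 - p * e1 - 4 * e4
  have s5 : z₁ ^ 5 + z₂ ^ 5 + z₃ ^ 5 + z₄ ^ 5 + z₅ ^ 5 = -5 * r := by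
    linear_combination r1 + r2 + r3 + r4 + r5 - p * s2 - q * e1
  have s6 : z₁ ^ 6 + z₂ ^ 6 + z₃ ^ 6 + z₄ ^ 6 + z₅ ^ 6 = 3 * p ^ 2 := by
    linear_combination z₁ * r1 + z₂ * r2 + z₃ * r3 + z₄ * r4 + z₅ * r5
      - p * s3 - q * s2 - r * e1
  have s7 : z₁ ^ 7 + z₂ ^ 7 + z₃ ^ 7 + z₄ ^ 7 + z₅ ^ 7 = 7 * p * q := by
    linear_combination z₁ ^ 2 * r1 + z₂ ^ 2 * r2 + z₃ ^ 2 * r3 + z₄ ^ 2 * r4 + z₅ ^ 2 * r5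
      - p * s4 - q * s3 - r * s2
  have s8 : z₁ ^ 8 + z₂ ^ 8 + z₃ ^ 8 + z₄ ^ 8 + z₅ ^ 8 = 8 * p * r + 4 * q ^ 2 := by
    linear_combination z₁ ^ 3 * r1 + z₂ ^ 3 * r2 + z₃ ^ 3 * r3 + z₄ ^ 3 * r4 + z₅ ^ 3 * r5
      - p * s5 - q * s4 - r * s3
  have hα' : α * (15 * p + 20 * q) = 3 * p ^ 2 - 10 * q - 25 * r := by
    rw [hα]
    exact div_mul_cancel₀ _ hden
  unfold bringQuinticTransform at hd ⊢
  obtain ⟨w₁, h₁⟩ : ∃ w, w = z₁ ^ 4 + d * z₁ ^ 3 + c * z₁ ^ 2 + b * z₁ + a := ⟨_, rfl⟩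
  obtain ⟨w₂, h₂⟩ : ∃ w, w = z₂ ^ 4 + d * z₂ ^ 3 + c * z₂ ^ 2 + b * z₂ + a := ⟨_, rfl⟩
  obtain ⟨w₃, h₃⟩ : ∃ w, w = z₃ ^ 4 + d * z₃ ^ 3 + c * z₃ ^ 2 + b * z₃ + a := ⟨_, rfl⟩
  obtain ⟨w₄, h₄⟩ : ∃ w, w = z₄ ^ 4 + d * z₄ ^ 3 + c * z₄ ^ 2 + b * z₄ + a := ⟨_, rfl⟩
  obtain ⟨w₅, h₅⟩ : ∃ w, w = z₅ ^ 4 + d * z₅ ^ 3 + c * z₅ ^ 2 + b * z₅ + a := ⟨_, rfl⟩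
  rw [← h₁, ← h₂, ← h₃, ← h₄, ← h₅, prod_expand] at hd ⊢
  have W1 : w₁ + w₂ + w₃ + w₄ + w₅ = 0 := by
    rw [h₁, h₂, h₃, h₄, h₅]
    linear_combination s4 + d * s3 + c * s2 + b * e1 + 5 * ha
  have V : (8 * p * r + 4 * q ^ 2) + 2 * d * (7 * p * q) + (d ^ 2 + 2 * c) * (3 * p ^ 2)
      + (2 * b + 2 * c * d) * (-5 * r) + (2 * a + 2 * b * d + c ^ 2) * (-4 * q)
      + (2 * a * d + 2 * b * c) * (-3 * p) + 5 * a ^ 2 = 0 := by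
    rw [ha, hb, hc]
    linear_combination (-2/5) * d ^ 2 * hα' - (2/5) * d * hlin - (2/5) * hquad
  have W2 : w₁ ^ 2 + w₂ ^ 2 + w₃ ^ 2 + w₄ ^ 2 + w₅ ^ 2 = 0 := by
    rw [h₁, h₂, h₃, h₄, h₅]
    linear_combination V + s8 + 2 * d * s7 + (d ^ 2 + 2 * c) * s6 + (2 * b + 2 * c * d) * s5
      + (2 * a + 2 * b * d + c ^ 2) * s4 + (2 * a * d + 2 * b * c) * s3
      + (2 * a * c + b ^ 2) * s2 + 2 * a * b * e1
  have E2 : w₁*w₂ + w₁*w₃ + w₁*w₄ + w₁*w₅ + w₂*w₃ + w₂*w₄ + w₂*w₅ + w₃*w₄ + w₃*w₅ + w₄*w₅ = 0 := by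
    linear_combination (1/2) * (w₁ + w₂ + w₃ + w₄ + w₅) * W1 - (1/2) * W2
  rw [W1, E2] at hd ⊢
  rw [coeff_two_quintic] at hd
  rw [hd]
  simp only [C_0, zero_mul, add_zero]
  exact ⟨_, _, rfl⟩
end

section
/- For any z₁, …, z₅ ∈ ℂ there exists a nonzero tuple (e, d, c, b, a) ∈ ℂ⁵ such that, setting gᵢ = e·zᵢ⁴ + d·zᵢ³ + c·zᵢ² + b·zᵢ + a for i = 1, …, 5, one has ∑ᵢ gᵢ = 0, ∑ᵢ gᵢ² = 0 and ∑ᵢ gᵢ³ = 0. Consequently, for every monic quintic f ∈ ℂ[X] there is a nonzero polynomial g ∈ ℂ[X] of degree at most 4 such that ∏ over the roots z of f (with multiplicity) of (Y − g(z)) equals Y⁵ + P·Y + Q for some P, Q ∈ ℂ. -/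
open Polynomial

/-- Evaluation of a quartic at five points either has a kernel or hits `(0, 1, i, -1, -i)`. -/
lemma bring_tuple (z : Fin 5 → ℂ) : ∃ e d c b a : ℂ,
      (e, d, c, b, a) ≠ ((0 : ℂ), (0 : ℂ), (0 : ℂ), (0 : ℂ), (0 : ℂ)) ∧
      (∑ i, (e * z i ^ 4 + d * z i ^ 3 + c * z i ^ 2 + b * z i + a)) = 0 ∧
      (∑ i, (e * z i ^ 4 + d * z i ^ 3 + c * z i ^ 2 + b * z i + a) ^ 2) = 0 ∧
      (∑ i, (e * z i ^ 4 + d * z i ^ 3 + c * z i ^ 2 + b * z i + a) ^ 3) = 0 := by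
  have key : ∃ v : Fin 5 → ℂ, v ≠ 0 ∧ ∃ w : Fin 5 → ℂ, (Matrix.vandermonde z).mulVec v = w ∧
      ∑ i, w i = 0 ∧ ∑ i, w i ^ 2 = 0 ∧ ∑ i, w i ^ 3 = 0 := by
    by_cases h : (Matrix.vandermonde z).det = 0
    · obtain ⟨v, hv, hv'⟩ := Matrix.exists_mulVec_eq_zero_iff.mpr h
      exact ⟨v, hv, 0, hv', by simp, by simp, by simp⟩
    · have hI : Complex.I ^ 3 = -Complex.I := by
        rw [pow_succ, Complex.I_sq]; ring
      refine ⟨(Matrix.vandermonde z)⁻¹.mulVec ![0, 1, Complex.I, -1, -Complex.I], ?_,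
        ![0, 1, Complex.I, -1, -Complex.I], ?_, ?_, ?_, ?_⟩
      · intro h0
        have h1 := congrArg (Matrix.vandermonde z).mulVec h0
        rw [Matrix.mulVec_mulVec, Matrix.mul_nonsing_inv _ (isUnit_iff_ne_zero.mpr h),
          Matrix.one_mulVec, Matrix.mulVec_zero] at h1
        have := congrFun h1 1
        simp at this
      · rw [Matrix.mulVec_mulVec, Matrix.mul_nonsing_inv _ (isUnit_iff_ne_zero.mpr h),
          Matrix.one_mulVec]
      · simp [Fin.sum_univ_succ]
      · simp [Fin.sum_univ_succ]
      · simp only [Fin.sum_univ_five]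
        simp
        linear_combination -hI
  obtain ⟨v, hv, w, hw, h1, h2, h3⟩ := key
  have hg : ∀ i, v 4 * z i ^ 4 + v 3 * z i ^ 3 + v 2 * z i ^ 2 + v 1 * z i + v 0 = w i := by
    intro i
    rw [← hw]
    simp [Matrix.mulVec, dotProduct, Fin.sum_univ_five, Matrix.vandermonde_apply]
    ring
  refine ⟨v 4, v 3, v 2, v 1, v 0, ?_, ?_, ?_, ?_⟩
  · intro h
    simp only [Prod.mk.injEq] at h
    apply hv
    ext i
    fin_cases i <;> simp [h]
  all_goals simpa only [hg]

/-- Newton's identities for five values. -/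
lemma bring_prod (x y z u v : ℂ) (h1 : x + y + z + u + v = 0)
    (h2 : x ^ 2 + y ^ 2 + z ^ 2 + u ^ 2 + v ^ 2 = 0)
    (h3 : x ^ 3 + y ^ 3 + z ^ 3 + u ^ 3 + v ^ 3 = 0) :
    ∃ P Q : ℂ, (X - C x) * ((X - C y) * ((X - C z) * ((X - C u) * (X - C v)))) =
      X ^ 5 + C P * X + C Q := by
  have e2 : x*y+x*z+x*u+x*v+y*z+y*u+y*v+z*u+z*v+u*v = 0 := by
    linear_combination ((x + y + z + u + v) * h1 - h2) / 2
  have e3 : x*y*z+x*y*u+x*y*v+x*z*u+x*z*v+x*u*v+y*z*u+y*z*v+y*u*v+z*u*v = 0 := by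
    linear_combination (h3 - (x^2+y^2+z^2+u^2+v^2) * h1 + (x + y + z + u + v) * e2) / 3
  refine ⟨x*y*z*u+x*y*z*v+x*y*u*v+x*z*u*v+y*z*u*v, -(x*y*z*u*v), ?_⟩
  have h1' := congrArg (C : ℂ → ℂ[X]) h1
  have e2' := congrArg (C : ℂ → ℂ[X]) e2
  have e3' := congrArg (C : ℂ → ℂ[X]) e3
  simp only [C_add, C_mul, C_neg, C_0] at h1' e2' e3' ⊢
  linear_combination (-X ^ 4) * h1' + X ^ 3 * e2' - X ^ 2 * e3'

/-- Bring's construction: for any five complex numbers `z₁, …, z₅` there is a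
nonzero tuple `(e, d, c, b, a)` such that `gᵢ = e·zᵢ⁴ + d·zᵢ³ + c·zᵢ² + b·zᵢ + a`
satisfies `∑gᵢ = ∑gᵢ² = ∑gᵢ³ = 0`; consequently every monic quintic over `ℂ`
admits a Tschirnhaus transformation by a nonzero polynomial of degree at most
`4` bringing it to Bring–Jerrard form `Y⁵ + P·Y + Q`. -/
theorem bring_curve_nonempty :
    (∀ z : Fin 5 → ℂ, ∃ e d c b a : ℂ,
      (e, d, c, b, a) ≠ ((0 : ℂ), (0 : ℂ), (0 : ℂ), (0 : ℂ), (0 : ℂ)) ∧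
      (∑ i, (e * z i ^ 4 + d * z i ^ 3 + c * z i ^ 2 + b * z i + a)) = 0 ∧
      (∑ i, (e * z i ^ 4 + d * z i ^ 3 + c * z i ^ 2 + b * z i + a) ^ 2) = 0 ∧
      (∑ i, (e * z i ^ 4 + d * z i ^ 3 + c * z i ^ 2 + b * z i + a) ^ 3) = 0) ∧
    (∀ f : Polynomial ℂ, f.Monic → f.natDegree = 5 →
      ∃ g : Polynomial ℂ, g ≠ 0 ∧ g.degree ≤ 4 ∧
        ∃ P Q : ℂ,
          (f.roots.map (fun z => X - C (g.eval z))).prod =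
            X ^ 5 + C P * X + C Q) := by
  refine ⟨bring_tuple, ?_⟩
  intro f hf hdeg
  have hcard : f.roots.card = 5 := by
    rw [← hdeg]
    exact (splits_iff_card_roots.mp (IsAlgClosed.splits f))
  obtain ⟨l, hl⟩ := Quot.exists_rep f.roots
  have hl' : f.roots = (l : Multiset ℂ) := hl.symm
  rw [hl', Multiset.coe_card] at hcard
  obtain ⟨z0, z1, z2, z3, z4, rfl⟩ : ∃ z0 z1 z2 z3 z4, l = [z0, z1, z2, z3, z4] := by
    match l, hcard with
    | [z0, z1, z2, z3, z4], _ => exact ⟨z0, z1, z2, z3, z4, rfl⟩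
  obtain ⟨e, d, c, b, a, hne, h1, h2, h3⟩ := bring_tuple ![z0, z1, z2, z3, z4]
  refine ⟨C e * X ^ 4 + C d * X ^ 3 + C c * X ^ 2 + C b * X + C a, ?_, ?_, ?_⟩
  · intro h0
    apply hne
    have k : ∀ n, (C e * X ^ 4 + C d * X ^ 3 + C c * X ^ 2 + C b * X + C a : ℂ[X]).coeff n = 0 := by
      intro n
      rw [h0, coeff_zero]
    have k0 := k 0
    have k1 := k 1
    have k2 := k 2
    have k3 := k 3
    have k4 := k 4
    simp [coeff_X, coeff_C, coeff_X_pow] at k0 k1 k2 k3 k4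
    simp [k0, k1, k2, k3, k4]
  · compute_degree
  · rw [hl']
    simp only [Fin.sum_univ_five] at h1 h2 h3
    simp only [Multiset.map_coe, Multiset.prod_coe, List.map_cons, List.map_nil, List.prod_cons,
      List.prod_nil, mul_one]
    apply bring_prod
    · simpa using h1
    · simpa using h2
    · simpa using h3
end
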